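/- For every n ≥ 22, every finite set S of points in general position in the plane consisting of n red points and at least n−1 blue points spans at least (1/32)·n^{3/2} empty red (2,1)-triangles. -/

import Mathlib

open scoped Classical

/-- A finite set of points in the plane is in general position if no three of its points are
collinear, i.e. every 3-element subset is affinely independent. -/
def GenPos2 (S : Finset (EuclideanSpace ℝ (Fin 2))) : Prop :=
  ∀ T ⊆ S, T.card = 3 →
    AffineIndependent ℝ (Subtype.val : {x : EuclideanSpace ℝ (Fin 2) // x ∈ T} → EuclideanSpace ℝ (Fin 2))

/-- `T` is empty with respect to `S`: no point of `S` other than the vertices lies in the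
(topological) interior of the convex hull of `T`. -/
def EmptyIn2 (S T : Finset (EuclideanSpace ℝ (Fin 2))) : Prop :=
  ∀ s ∈ S, s ∉ T → s ∉ interior (convexHull ℝ (T : Set (EuclideanSpace ℝ (Fin 2))))

/-- The number of empty red (2,1)-triangles spanned by the bicolored set `R ∪ B`:
3-element subsets with two red points and one blue point whose convex hull contains no other
point of `R ∪ B` in its interior. -/
noncomputable def emptyRed21Count (R B : Finset (EuclideanSpace ℝ (Fin 2))) : ℕ :=
  (((R ∪ B).powersetCard 3).filter (fun T =>
    (T ∩ R).card = 2 ∧ (T ∩ B).card = 1 ∧ EmptyIn2 (R ∪ B) T)).card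

abbrev E2 := EuclideanSpace ℝ (Fin 2)

/-! ### Combinatorics of walks -/

/-- number of red letters among the first `i`. -/
def wrc (c : ℕ → Bool) : ℕ → ℕ
  | 0 => 0
  | i + 1 => wrc c i + (if c i then 1 else 0)

/-- maximal (clipped) excess of a suffix. -/
def wex (c : ℕ → Bool) : ℕ → ℕ
  | 0 => 0
  | i + 1 => if c i then wex c i + 1 else wex c i - 1

/-- number of blue letters with a large excess. -/
def wgd (c : ℕ → Bool) (k : ℕ) : ℕ → ℕ
  | 0 => 0
  | i + 1 => wgd c k i + (if c i = false ∧ k + 1 ≤ wex c i then 1 else 0)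

/-- number of red runs -/
def wrun (c : ℕ → Bool) : ℕ → ℕ
  | 0 => 0
  | i + 1 => wrun c i + (if c i = true ∧ (i = 0 ∨ c (i - 1) = false) then 1 else 0)

/-- number of colour changes among the first `i+1` letters -/
def wch (c : ℕ → Bool) : ℕ → ℕ
  | 0 => 0
  | i + 1 => wch c i + (if c i ≠ c (i + 1) then 1 else 0)

/-- height -/
def wht (c : ℕ → Bool) (i : ℕ) : ℤ := 2 * (wrc c i : ℤ) - i

lemma wex_attained (c : ℕ → Bool) (i : ℕ) : ∃ j ≤ i, wht c i - wht c j = wex c i := by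
  induction i with
  | zero => exact ⟨0, le_rfl, by simp [wex]⟩
  | succ i ih =>
    obtain ⟨j, hj, h⟩ := ih
    rcases hc : c i with _ | _
    · rcases Nat.eq_zero_or_pos (wex c i) with h0 | h0
      · exact ⟨i + 1, le_rfl, by simp [wex, hc, h0]⟩
      · refine ⟨j, by omega, ?_⟩
        simp only [wht, wrc, wex, hc] at *
        simp
        omega
    · refine ⟨j, by omega, ?_⟩
      simp only [wht, wrc, wex, hc] at *
      simp
      omega

lemma wgd_bound (c : ℕ → Bool) (k i : ℕ) :
    (1 ≤ i → c (i - 1) = true →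
      1 ≤ wrun c i ∧ wrc c i + k ≤ wgd c k i + wex c i + k * wrun c i) ∧
    ((i = 0 ∨ c (i - 1) = false) →
      wrc c i ≤ wgd c k i + (wex c i - k) + k * wrun c i) := by
  induction i with
  | zero => simp [wrc]
  | succ i ih =>
    obtain ⟨h1, h2⟩ := ih
    have key : (1 ≤ i ∧ c (i - 1) = true) ∨ (i = 0 ∨ c (i - 1) = false) := by
      rcases Nat.eq_zero_or_pos i with h | h
      · exact Or.inr (Or.inl h)
      · rcases hc : c (i - 1) with _ | _
        · exact Or.inr (Or.inr rfl)
        · exact Or.inl ⟨h, rfl⟩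
    rcases hc : c i with _ | _
    · refine ⟨by simp [hc], fun _ => ?_⟩
      have h3 : wrc c i ≤ wgd c k i + (wex c i - k) + k * wrun c i := by
        rcases key with ⟨ha, hb⟩ | hb
        · have := h1 ha hb
          omega
        · exact h2 hb
      simp only [wrc, wgd, wex, wrun, hc]
      simp
      split_ifs <;> omega
    · refine ⟨fun _ _ => ?_, by simp [hc]⟩
      rcases key with ⟨ha, hb⟩ | hb
      · have := h1 ha hb
        have hi : ¬ (i = 0) := by omega
        simp only [wrc, wgd, wex, wrun, hc, hb]
        simp [hi]
        omega
      · have := h2 hb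
        simp only [wrc, wgd, wex, wrun, hc]
        simp [hb]
        have : k * (wrun c i + 1) = k * wrun c i + k := by ring
        omega

lemma wgd_bound' (c : ℕ → Bool) (k i : ℕ) :
    wrc c i ≤ wgd c k i + wex c i + k * wrun c i := by
  rcases Nat.eq_zero_or_pos i with h | h
  · subst h; simp [wrc]
  · rcases hc : c (i - 1) with _ | _
    · have := (wgd_bound c k i).2 (Or.inr hc)
      omega
    · have := (wgd_bound c k i).1 h hc
      omega

lemma wrun_bound (c : ℕ → Bool) (i : ℕ) :
    (c i = true → 2 * wrun c (i + 1) ≤ wch c i + 2) ∧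
    (c i = false → 2 * wrun c (i + 1) ≤ wch c i + 1) := by
  induction i with
  | zero =>
    constructor <;> intro h <;> simp [wrun, h]
  | succ i ih =>
    obtain ⟨h1, h2⟩ := ih
    have hi : ¬ (i + 1 = 0) := by omega
    rw [wrun, wch]
    rcases hc : c i with _ | _ <;> rcases hd : c (i + 1) with _ | _ <;>
      simp [hc, hd] at * <;> omega

lemma wch_pos (c : ℕ → Bool) (i : ℕ) (h : wch c i = 0) : ∀ j ≤ i, c j = c i := by
  induction i with
  | zero => intro j hj; have : j = 0 := by omega
            rw [this]
  | succ i ih =>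
    simp only [wch] at h
    intro j hj
    have h1 : c i = c (i + 1) := by
      by_contra h'
      simp [h'] at h
    rcases Nat.lt_or_ge i j with h2 | h2
    · have : j = i + 1 := by omega
      rw [this]
    · rw [← h1]; exact ih (by omega) j h2

lemma wrc_mono (c : ℕ → Bool) {i j : ℕ} (h : i ≤ j) :
    wrc c i ≤ wrc c j ∧ wrc c j ≤ wrc c i + (j - i) := by
  induction j, h using Nat.le_induction with
  | base => simp
  | succ j h ih => simp only [wrc]; split_ifs <;> omega

lemma wrc_eq (c : ℕ → Bool) (i : ℕ) : wrc c i = ((Finset.range i).filter (fun j => c j = true)).card := by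
  induction i with
  | zero => simp [wrc]
  | succ i ih =>
    rw [Finset.range_add_one, Finset.filter_insert]
    split_ifs with h <;> simp [wrc, h, ih]

lemma wgd_eq (c : ℕ → Bool) (k i : ℕ) :
    wgd c k i = ((Finset.range i).filter (fun j => c j = false ∧ k + 1 ≤ wex c j)).card := by
  induction i with
  | zero => simp [wgd]
  | succ i ih =>
    rw [Finset.range_add_one, Finset.filter_insert, wgd]
    split_ifs with h
    · simp [ih]
    · simp only [ih, add_zero]

lemma wch_eq (c : ℕ → Bool) (i : ℕ) :
    wch c i = ((Finset.range i).filter (fun j => c j ≠ c (j + 1))).card := by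
  induction i with
  | zero => simp [wch]
  | succ i ih =>
    rw [Finset.range_add_one, Finset.filter_insert]
    split_ifs with h <;> simp [wch, h, ih]

/-- reversed word -/
def wrev (c : ℕ → Bool) (N : ℕ) (j : ℕ) : Bool := c (N - 1 - j)

lemma wrc_rev (c : ℕ → Bool) (N i : ℕ) (h : i ≤ N) :
    wrc (wrev c N) i + wrc c (N - i) = wrc c N := by
  induction i with
  | zero => simp [wrc]
  | succ i ih =>
    have := ih (by omega)
    have h1 : N - i = (N - (i + 1)) + 1 := by omega
    rw [h1] at this
    simp only [wrc] at *
    have h2 : wrev c N i = c (N - (i + 1)) := by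
      unfold wrev; congr 1; omega
    rw [h2]; omega

lemma wch_rev (c : ℕ → Bool) (M i : ℕ) (h : i ≤ M) :
    wch (wrev c (M + 1)) i + wch c (M - i) = wch c M := by
  induction i with
  | zero => simp [wch]
  | succ i ih =>
    have := ih (by omega)
    have h1 : M - i = (M - (i + 1)) + 1 := by omega
    rw [h1] at this
    simp only [wch] at *
    have h2 : wrev c (M + 1) i = c (M - (i + 1) + 1) := by
      unfold wrev; congr 1
    have h3 : wrev c (M + 1) (i + 1) = c (M - (i + 1)) := by
      unfold wrev; congr 1
    rw [h2, h3]
    have h4 : (c (M - (i + 1) + 1) ≠ c (M - (i + 1))) ↔ (c (M - (i + 1)) ≠ c (M - (i + 1) + 1)) :=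
      ne_comm
    simp only [h4]
    omega

/-- `b` at position `j` is `k`-good: an interval containing it has excess at least `k`. -/
def wgood (c : ℕ → Bool) (N k j : ℕ) : Prop :=
  ∃ u v, u ≤ j ∧ j < v ∧ v ≤ N ∧ (k : ℤ) ≤ wht c v - wht c u

lemma walk_main (c : ℕ → Bool) (N : ℕ) (hN : 1 ≤ N) (hr : 1 ≤ wrc c N) (hb : 2 * wrc c N ≤ N) :
    1 ≤ wch c (N - 1) ∧ ∀ k : ℕ,
    wrc c N ≤ 2 * ((Finset.range N).filter (fun j => c j = false ∧ wgood c N k j)).card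
      + 2 * k * wch c (N - 1) := by
  obtain ⟨M, rfl⟩ : ∃ M, N = M + 1 := ⟨N - 1, by omega⟩
  simp only [Nat.add_sub_cancel]
  have hX : 1 ≤ wch c M := by
    by_contra h
    have h0 := wch_pos c M (by omega)
    rcases hc : c M with _ | _
    · have : wrc c (M + 1) = 0 := by
        rw [wrc_eq, Finset.card_eq_zero, Finset.filter_eq_empty_iff]
        intro j hj
        rw [h0 j (by simpa [Nat.lt_succ_iff] using hj), hc]; simp
      omega
    · have : wrc c (M + 1) = M + 1 := by
        rw [wrc_eq, Finset.filter_true_of_mem]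
        · simp
        · intro j hj
          rw [h0 j (by simpa [Nat.lt_succ_iff] using hj), hc]
      omega
  refine ⟨hX, fun k => ?_⟩
  set c' := wrev c (M + 1) with hc'
  have hrunb : ∀ d : ℕ → Bool, wch d M = wch c M → wrun d (M + 1) ≤ wch c M := by
    intro d hd
    have := wrun_bound d M
    rcases hdm : d M with _ | _
    · have := this.2 hdm; omega
    · have := this.1 hdm; omega
  have hr1 := hrunb c rfl
  have hr2 := hrunb c' (by have := wch_rev c M M le_rfl; simpa [wch] using this)
  have g1 := wgd_bound' c k (M + 1)
  have g2 := wgd_bound' c' k (M + 1)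
  have hrc : wrc c' (M + 1) = wrc c (M + 1) := by
    have := wrc_rev c (M + 1) (M + 1) le_rfl; simpa [wrc] using this
  have hht : ∀ i ≤ M + 1, wht c' i = wht c (M + 1) - wht c (M + 1 - i) := by
    intro i hi
    have := wrc_rev c (M + 1) i hi
    simp only [wht]
    rw [← hc'] at this
    omega
  -- excess bound
  have hex : wex c (M + 1) + wex c' (M + 1) ≤ wrc c (M + 1) := by
    obtain ⟨i, hi, h1⟩ := wex_attained c (M + 1)
    obtain ⟨i', hi', h2⟩ := wex_attained c' (M + 1)
    rw [hht _ le_rfl, hht i' hi'] at h2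
    have h3 := wrc_mono c hi
    have h4 := wrc_mono c (show M + 1 - i' ≤ M + 1 by omega)
    have hw0 : wrc c 0 = 0 := rfl
    simp only [wht, Nat.sub_self, hw0] at h1 h2
    rcases le_total i (M + 1 - i') with h5 | h5
    · have h6 := wrc_mono c h5
      omega
    · have h6 := wrc_mono c h5
      have := wrc_mono c (Nat.zero_le (M + 1 - i'))
      omega
  set G := (Finset.range (M + 1)).filter (fun j => c j = false ∧ wgood c (M + 1) k j) with hG
  have hg1 : wgd c k (M + 1) ≤ G.card := by
    rw [wgd_eq]
    apply Finset.card_le_card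
    intro j hj
    simp only [Finset.mem_filter, Finset.mem_range, hG] at hj ⊢
    obtain ⟨hj1, hj2, hj3⟩ := hj
    refine ⟨hj1, hj2, ?_⟩
    obtain ⟨i, hi, h1⟩ := wex_attained c j
    refine ⟨i, j + 1, hi, by omega, by omega, ?_⟩
    simp only [wht, wrc, hj2] at *
    simp
    omega
  have hg2 : wgd c' k (M + 1) ≤ G.card := by
    rw [wgd_eq]
    apply Finset.card_le_card_of_injOn (fun j => M - j)
    · intro j hj
      simp only [Finset.coe_filter, Finset.mem_range, hG, Set.mem_ofPred_eq] at hj ⊢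
      obtain ⟨hj1, hj2, hj3⟩ := hj
      have hcj : c (M - j) = false := by rw [← hj2, hc']; simp [wrev]
      refine ⟨by omega, hcj, ?_⟩
      obtain ⟨i, hi, h1⟩ := wex_attained c' j
      rw [hht _ (by omega), hht i (by omega)] at h1
      refine ⟨M - j, M + 1 - i, le_rfl, by omega, by omega, ?_⟩
      have h2 : M + 1 - j = (M - j) + 1 := by omega
      rw [h2] at h1
      simp only [wht, wrc, hcj] at *
      simp at h1
      omega
    · intro a ha b hb hab
      simp at ha hb hab
      omega
  have m1 : k * wrun c (M + 1) ≤ k * wch c M := Nat.mul_le_mul_left _ hr1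
  have m2 : k * wrun c' (M + 1) ≤ k * wch c M := Nat.mul_le_mul_left _ hr2
  have : 2 * k * wch c M = k * wch c M + k * wch c M := by ring
  omega

/-! ### Geometry -/

lemma int_lt (l : E2 →L[ℝ] ℝ) (hl : l ≠ 0) (T : Set E2) (c : ℝ) (h : ∀ x ∈ T, l x ≤ c)
    (z : E2) (hz : z ∈ interior (convexHull ℝ T)) : l z < c := by
  have h1 : convexHull ℝ T ⊆ {x | l x ≤ c} :=
    convexHull_min h (convex_halfSpace_le l.toLinearMap.isLinear c)
  have h2 : l '' interior (convexHull ℝ T) ⊆ interior (Set.Iic c) := by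
    apply interior_maximal
    · rintro _ ⟨x, hx, rfl⟩
      exact h1 (interior_subset hx)
    · exact l.isOpenMap_of_ne_zero hl _ isOpen_interior
  have h3 := h2 ⟨z, hz, rfl⟩
  rw [interior_Iic] at h3
  exact h3

/-- A coordinate system adapted to the point set. -/
structure Frame (S : Finset E2) (f g : E2 →L[ℝ] ℝ) : Prop where
  w1 : ∃ w, f w = 0 ∧ g w ≠ 0
  w2 : ∃ w, f w ≠ 0
  inj : ∀ a ∈ S, ∀ b ∈ S, f a = f b → a = b
  gp : ∀ a ∈ S, ∀ b ∈ S, ∀ c ∈ S, a ≠ b → a ≠ c → b ≠ c →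
    (g b - g a) * (f c - f a) ≠ (g c - g a) * (f b - f a)

lemma Frame.neg {S : Finset E2} {f g : E2 →L[ℝ] ℝ} (fr : Frame S f g) : Frame S (-f) g := by
  obtain ⟨⟨w, h1, h2⟩, ⟨w', h3⟩, hi, hg⟩ := fr
  refine ⟨⟨w, by simp [h1], h2⟩, ⟨w', by simpa using h3⟩, ?_, ?_⟩
  · intro a ha b hb h
    exact hi a ha b hb (by simpa using h)
  · intro a ha b hb c hc h1 h2 h3 h
    apply hg a ha b hb c hc h1 h2 h3
    simp only [neg_apply] at h
    linarith

noncomputable def slp (f g : E2 →L[ℝ] ℝ) (o z : E2) : ℝ := (g z - g o) / (f z - f o)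

lemma Frame.slp_inj {S : Finset E2} {f g : E2 →L[ℝ] ℝ} (fr : Frame S f g) {o a b : E2}
    (ho : o ∈ S) (ha : a ∈ S) (hb : b ∈ S) (h1 : f o < f a) (h2 : f o < f b)
    (h : slp f g o a = slp f g o b) : a = b := by
  by_contra hab
  refine fr.gp o ho a ha b hb ?_ ?_ hab ?_
  · rintro rfl; exact lt_irrefl _ h1
  · rintro rfl; exact lt_irrefl _ h2
  · unfold slp at h
    rw [div_eq_div_iff (by linarith) (by linarith)] at h
    exact h

lemma Frame.cone {S : Finset E2} {f g : E2 →L[ℝ] ℝ} (fr : Frame S f g) (T : Set E2) (o : E2)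
    (α β : ℝ) (hT : ∀ x ∈ T, x = o ∨ (f o < f x ∧ α ≤ slp f g o x ∧ slp f g o x ≤ β))
    (z : E2) (hz : z ∈ interior (convexHull ℝ T)) :
    f o < f z ∧ α < slp f g o z ∧ slp f g o z < β := by
  obtain ⟨w, hw1, hw2⟩ := fr.w1
  obtain ⟨w', hw'⟩ := fr.w2
  have h1 : f o < f z := by
    have := int_lt (-f) (by
      intro h; apply hw'
      have := congrArg (fun l : E2 →L[ℝ] ℝ => l w') h
      simpa using this) T (- f o) (by
      intro x hx
      rcases hT x hx with rfl | h
      · simp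
      · simp; linarith [h.1]) z hz
    simp at this
    exact this
  have h2 : α * (f z - f o) < g z - g o := by
    have := int_lt (α • f - g) (by
      intro h; apply hw2
      have := congrArg (fun l : E2 →L[ℝ] ℝ => l w) h
      simpa [hw1] using this) T (α * f o - g o) (by
      intro x hx
      rcases hT x hx with rfl | ⟨h, h', _⟩
      · simp
      · unfold slp at h'
        rw [le_div_iff₀ (by linarith)] at h'
        simp; linarith) z hz
    simp at this
    linarith
  have h3 : g z - g o < β * (f z - f o) := by
    have := int_lt (g - β • f) (by
      intro h; apply hw2
      have := congrArg (fun l : E2 →L[ℝ] ℝ => l w) h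
      simpa [hw1] using this) T (g o - β * f o) (by
      intro x hx
      rcases hT x hx with rfl | ⟨h, _, h'⟩
      · simp
      · unfold slp at h'
        rw [div_le_iff₀ (by linarith)] at h'
        simp; linarith) z hz
    simp at this
    linarith
  refine ⟨h1, ?_, ?_⟩
  · unfold slp
    rw [lt_div_iff₀ (by linarith)]; exact h2
  · unfold slp
    rw [div_lt_iff₀ (by linarith)]; exact h3

lemma enum_exists (H : Finset E2) (σ : E2 → ℝ) (inj : ∀ a ∈ H, ∀ b ∈ H, σ a = σ b → a = b) :
    ∃ e : ℕ → E2, (∀ i < H.card, e i ∈ H) ∧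
      (∀ i j, i < j → j < H.card → σ (e i) < σ (e j)) ∧ ∀ z ∈ H, ∃ i < H.card, e i = z := by
  have hc : (H.image σ).card = H.card := Finset.card_image_of_injOn (fun a ha b hb h => inj a ha b hb h)
  let φ := (H.image σ).orderEmbOfFin hc
  have hφ : ∀ i : Fin H.card, ∃ x ∈ H, σ x = φ i := by
    intro i
    have := (H.image σ).orderEmbOfFin_mem hc i
    exact Finset.mem_image.1 this
  choose x hx1 hx2 using hφ
  refine ⟨fun i => if h : i < H.card then x ⟨i, h⟩ else 0, ?_, ?_, ?_⟩
  · intro i hi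
    simp only [hi, dif_pos]
    exact hx1 _
  · intro i j hij hj
    have hi : i < H.card := by omega
    simp only [hi, hj, dif_pos, hx2]
    exact φ.strictMono hij
  · intro z hz
    have : σ z ∈ Set.range φ := by
      rw [Finset.range_orderEmbOfFin]
      exact Finset.mem_coe.2 (Finset.mem_image_of_mem _ hz)
    obtain ⟨i, hi⟩ := this
    refine ⟨i, i.2, ?_⟩
    simp only [i.2, dif_pos]
    apply inj _ (hx1 _) _ hz
    rw [hx2]; exact hi

noncomputable def EmT (R B : Finset E2) : Finset (Finset E2) :=
  (((R ∪ B).powersetCard 3).filter (fun T =>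
    (T ∩ R).card = 2 ∧ (T ∩ B).card = 1 ∧ EmptyIn2 (R ∪ B) T))

lemma mem_EmT {R B : Finset E2} (hd : Disjoint R B) {b q q' : E2} (hb : b ∈ B) (hq : q ∈ R)
    (hq' : q' ∈ R) (hne : q ≠ q') (hem : EmptyIn2 (R ∪ B) {b, q, q'}) :
    ({b, q, q'} : Finset E2) ∈ EmT R B := by
  have hbR : b ∉ R := fun h => Finset.disjoint_left.1 hd h hb
  have hqB : q ∉ B := fun h => Finset.disjoint_left.1 hd hq h
  have hqB' : q' ∉ B := fun h => Finset.disjoint_left.1 hd hq' h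
  have h1 : b ≠ q := by rintro rfl; exact hbR hq
  have h2 : b ≠ q' := by rintro rfl; exact hbR hq'
  unfold EmT
  rw [Finset.mem_filter, Finset.mem_powersetCard]
  refine ⟨⟨?_, ?_⟩, ?_, ?_, hem⟩
  · intro x hx
    simp at hx
    rcases hx with rfl | rfl | rfl <;> simp [*]
  · rw [Finset.card_eq_three]
    exact ⟨b, q, q', h1, h2, hne, rfl⟩
  · rw [Finset.insert_inter_of_notMem hbR, Finset.insert_inter_of_mem hq,
      Finset.singleton_inter_of_mem hq', Finset.card_pair hne]
  · rw [Finset.insert_inter_of_mem hb, Finset.insert_inter_of_notMem hqB,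
      Finset.singleton_inter_of_notMem hqB']
    simp

lemma tri_inj {o : E2} {e : ℕ → E2} {N : ℕ} (ho : ∀ i < N, e i ≠ o)
    (hinj : ∀ i < N, ∀ j < N, e i = e j → i = j) {i j : ℕ} (hi : i + 1 < N) (hj : j + 1 < N)
    (h : ({o, e i, e (i + 1)} : Finset E2) = {o, e j, e (j + 1)}) : i = j := by
  have key : ∀ i j : ℕ, i + 1 < N → j + 1 < N →
      ({o, e i, e (i + 1)} : Finset E2) = {o, e j, e (j + 1)} → j ≤ i := by
    intro i j hi hj h
    have h1 : e i ∈ ({o, e j, e (j + 1)} : Finset E2) := by rw [← h]; simp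
    simp only [Finset.mem_insert, Finset.mem_singleton] at h1
    rcases h1 with h1 | h1 | h1
    · exact absurd h1 (ho i (by omega))
    · have := hinj i (by omega) j (by omega) h1; omega
    · have := hinj i (by omega) (j + 1) (by omega) h1; omega
  exact le_antisymm (key j i hj hi h.symm) (key i j hi hj h)

lemma enum_inj {σ : E2 → ℝ} {e : ℕ → E2} {N : ℕ} (h : ∀ i j, i < j → j < N → σ (e i) < σ (e j)) :
    ∀ i < N, ∀ j < N, e i = e j → i = j := by
  intro i hi j hj hij
  rcases lt_trichotomy i j with h1 | h1 | h1
  · have := h i j h1 hj; rw [hij] at this; exact absurd this (lt_irrefl _)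
  · exact h1
  · have := h j i h1 hi; rw [hij] at this; exact absurd this (lt_irrefl _)

lemma enum_lt {σ : E2 → ℝ} {e : ℕ → E2} {N : ℕ} (h : ∀ i j, i < j → j < N → σ (e i) < σ (e j))
    {i j : ℕ} (hi : i < N) (hij : σ (e i) < σ (e j)) : i < j := by
  by_contra hc
  rcases Nat.lt_or_ge j i with h1 | h1
  · have := h j i h1 hi; linarith
  · have : i = j := by omega
    rw [this] at hij; exact absurd hij (lt_irrefl _)

/-- Colour changes around a red point give empty triangles. -/
lemma red_changes {R B : Finset E2} {f g : E2 →L[ℝ] ℝ} (fr : Frame (R ∪ B) f g)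
    (hd : Disjoint R B) {p : E2} (hp : p ∈ R) (e : ℕ → E2) (N : ℕ)
    (he1 : ∀ i < N, e i ∈ (R ∪ B).filter (fun z => f p < f z))
    (he2 : ∀ i j, i < j → j < N → slp f g p (e i) < slp f g p (e j))
    (he3 : ∀ z ∈ (R ∪ B).filter (fun z => f p < f z), ∃ i < N, e i = z) :
    wch (fun i => decide (e i ∈ R)) (N - 1) ≤ ((EmT R B).filter (fun T => p ∈ T)).card := by
  rw [wch_eq]
  have hinj := enum_inj he2
  have hne : ∀ i < N, e i ≠ p := by
    intro i hi h
    have := (Finset.mem_filter.1 (he1 i hi)).2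
    rw [h] at this; exact lt_irrefl _ this
  apply Finset.card_le_card_of_injOn (fun i => ({p, e i, e (i + 1)} : Finset E2))
  · intro i hi
    simp only [Finset.coe_filter, Finset.mem_range, Set.mem_ofPred_eq] at hi ⊢
    obtain ⟨hi, hch⟩ := hi
    have hi1 : i + 1 < N := by omega
    have m1 := Finset.mem_filter.1 (he1 i (by omega))
    have m2 := Finset.mem_filter.1 (he1 (i + 1) hi1)
    have hs := he2 i (i + 1) (by omega) hi1
    have hem : EmptyIn2 (R ∪ B) {p, e i, e (i + 1)} := by
      intro z hz hzT hzi
      have hc := fr.cone _ p (slp f g p (e i)) (slp f g p (e (i + 1))) (by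
        intro x hx
        simp at hx
        rcases hx with rfl | rfl | rfl
        · exact Or.inl rfl
        · exact Or.inr ⟨m1.2, le_rfl, hs.le⟩
        · exact Or.inr ⟨m2.2, hs.le, le_rfl⟩) z hzi
      obtain ⟨l, hl, rfl⟩ := he3 z (Finset.mem_filter.2 ⟨hz, hc.1⟩)
      have := enum_lt he2 (by omega) hc.2.1
      have := enum_lt he2 hl hc.2.2
      omega
    refine ⟨?_, by simp⟩
    by_cases h1 : e i ∈ R <;> by_cases h2 : e (i + 1) ∈ R
    · simp [h1, h2] at hch
    · have h3 : e (i + 1) ∈ B := (Finset.mem_union.1 m2.1).resolve_left h2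
      have : ({p, e i, e (i + 1)} : Finset E2) = {e (i + 1), p, e i} := by
        ext x; simp; tauto
      rw [this] at hem ⊢
      exact mem_EmT hd h3 hp h1 (hne i (by omega)).symm hem
    · have h3 : e i ∈ B := (Finset.mem_union.1 m1.1).resolve_left h1
      have : ({p, e i, e (i + 1)} : Finset E2) = {e i, p, e (i + 1)} := by
        ext x; simp; tauto
      rw [this] at hem ⊢
      exact mem_EmT hd h3 hp h2 (hne (i + 1) hi1).symm hem
    · simp [h1, h2] at hch
  · intro i hi j hj h
    simp only [Finset.coe_filter, Finset.mem_range, Set.mem_ofPred_eq] at hi hj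
    exact tri_inj hne hinj (by omega) (by omega) h

lemma blue_half {R B : Finset E2} {f g : E2 →L[ℝ] ℝ} (fr : Frame (R ∪ B) f g)
    (hd : Disjoint R B) {b : E2} (hb : b ∈ B) (C : Finset E2) (hCS : C ⊆ R ∪ B) (hbC : b ∈ C)
    (hC : ∀ T : Finset E2, T ⊆ C → ∀ z ∈ R ∪ B,
      z ∈ interior (convexHull ℝ (T : Set E2)) → z ∈ C) :
    ((C ∩ R).filter (fun x => f b < f x)).card ≤ 1 + ((C ∩ B).filter (fun x => f b < f x)).card +
      ((EmT R B).filter (fun T => b ∈ T ∧ ∀ x ∈ T, f b ≤ f x)).card := by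
  set Q := (C ∩ R).filter (fun x => f b < f x) with hQ
  set Z := (C ∩ B).filter (fun x => f b < f x) with hZ
  have hbS : b ∈ R ∪ B := hCS hbC
  have hQm : ∀ x ∈ Q, x ∈ C ∧ x ∈ R ∧ f b < f x := by
    intro x hx
    simp [hQ] at hx
    tauto
  obtain ⟨e, he1, he2, he3⟩ := enum_exists Q (slp f g b) (by
    intro x hx y hy h
    exact fr.slp_inj hbS (hCS (hQm x hx).1) (hCS (hQm y hy).1) (hQm x hx).2.2 (hQm y hy).2.2 h)
  have hinj := enum_inj he2
  have hne : ∀ i < Q.card, e i ≠ b := by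
    intro i hi h
    have := (hQm _ (he1 i hi)).2.2
    rw [h] at this; exact lt_irrefl _ this
  let P : ℕ → Prop := fun i => EmptyIn2 (R ∪ B) {b, e i, e (i + 1)}
  have hsplit := Finset.card_filter_add_card_filter_not (s := Finset.range (Q.card - 1)) P
  have hA : ((Finset.range (Q.card - 1)).filter P).card ≤
      ((EmT R B).filter (fun T => b ∈ T ∧ ∀ x ∈ T, f b ≤ f x)).card := by
    apply Finset.card_le_card_of_injOn (fun i => ({b, e i, e (i + 1)} : Finset E2))
    · intro i hi
      simp only [Finset.coe_filter, Finset.mem_range, Set.mem_ofPred_eq] at hi ⊢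
      obtain ⟨hi, hP⟩ := hi
      have m1 := hQm _ (he1 i (by omega))
      have m2 := hQm _ (he1 (i + 1) (by omega))
      refine ⟨mem_EmT hd hb m1.2.1 m2.2.1 ?_ hP, by simp, ?_⟩
      · intro h
        have := hinj i (by omega) (i + 1) (by omega) h
        omega
      · intro x hx
        simp at hx
        rcases hx with rfl | rfl | rfl
        · exact le_rfl
        · exact m1.2.2.le
        · exact m2.2.2.le
    · intro i hi j hj h
      simp only [Finset.coe_filter, Finset.mem_range, Set.mem_ofPred_eq] at hi hj
      exact tri_inj hne hinj (by omega) (by omega) h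
  have hA' : ((Finset.range (Q.card - 1)).filter (fun i => ¬ P i)).card ≤ Z.card := by
    have hex : ∀ i : ℕ, ∃ z : E2, i + 1 < Q.card → ¬ P i →
        z ∈ Z ∧ slp f g b (e i) < slp f g b z ∧ slp f g b z < slp f g b (e (i + 1)) := by
      intro i
      by_cases hi : i + 1 < Q.card
      swap
      · exact ⟨0, fun h => absurd h hi⟩
      by_cases hP : P i
      · exact ⟨0, fun _ h => absurd hP h⟩
      have hP0 := hP
      simp only [P, EmptyIn2] at hP
      push Not at hP
      obtain ⟨z, hz, hzT, hzi⟩ := hP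
      refine ⟨z, fun _ _ => ?_⟩
      have m1 := hQm _ (he1 i (by omega))
      have m2 := hQm _ (he1 (i + 1) (by omega))
      have hs := he2 i (i + 1) (by omega) hi
      have hc := fr.cone _ b (slp f g b (e i)) (slp f g b (e (i + 1))) (by
        intro x hx
        simp at hx
        rcases hx with rfl | rfl | rfl
        · exact Or.inl rfl
        · exact Or.inr ⟨m1.2.2, le_rfl, hs.le⟩
        · exact Or.inr ⟨m2.2.2, hs.le, le_rfl⟩) z hzi
      have hzC : z ∈ C := hC _ (by
        intro x hx
        simp at hx
        rcases hx with rfl | rfl | rfl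
        · exact hbC
        · exact m1.1
        · exact m2.1) z hz hzi
      refine ⟨?_, hc.2⟩
      rcases Finset.mem_union.1 hz with hR | hB
      · exfalso
        obtain ⟨l, hl, rfl⟩ := he3 z (by simp [hQ, hzC, hR, hc.1])
        have := enum_lt he2 (by omega) hc.2.1
        have := enum_lt he2 hl hc.2.2
        omega
      · simp [hZ, hzC, hB, hc.1]
    choose z hz using hex
    apply Finset.card_le_card_of_injOn z
    · intro i hi
      simp only [Finset.coe_filter, Finset.mem_range, Set.mem_ofPred_eq] at hi
      exact (hz i (by omega) hi.2).1
    · have key : ∀ i j : ℕ, i < j → j + 1 < Q.card → ¬ P i → ¬ P j → z i ≠ z j := by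
        intro i j hij hj hPi hPj h
        have h1 := (hz i (by omega) hPi).2.2
        have h2 := (hz j (by omega) hPj).2.1
        rw [h] at h1
        have h3 := enum_lt he2 (by omega) (h2.trans h1)
        omega
      intro i hi j hj h
      simp only [Finset.coe_filter, Finset.mem_range, Set.mem_ofPred_eq] at hi hj
      rcases lt_trichotomy i j with h1 | h1 | h1
      · exact absurd h (key i j h1 (by omega) hi.2 hj.2)
      · exact h1
      · exact absurd h.symm (key j i h1 (by omega) hj.2 hi.2)
  rw [Finset.card_range] at hsplit
  omega

lemma blue_total {R B : Finset E2} {f g : E2 →L[ℝ] ℝ} (fr : Frame (R ∪ B) f g)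
    (hd : Disjoint R B) {b : E2} (hb : b ∈ B) (C : Finset E2) (hCS : C ⊆ R ∪ B) (hbC : b ∈ C)
    (hC : ∀ T : Finset E2, T ⊆ C → ∀ z ∈ R ∪ B,
      z ∈ interior (convexHull ℝ (T : Set E2)) → z ∈ C) :
    (C ∩ R).card ≤ 1 + (C ∩ B).card + ((EmT R B).filter (fun T => b ∈ T)).card := by
  have h1 := blue_half fr hd hb C hCS hbC hC
  have h2 := blue_half fr.neg hd hb C hCS hbC hC
  simp only [neg_apply, neg_lt_neg_iff, neg_le_neg_iff] at h2
  have hbR : b ∉ R := fun h => Finset.disjoint_left.1 hd h hb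
  have hbS : b ∈ R ∪ B := hCS hbC
  have e1 : (C ∩ R).card ≤ ((C ∩ R).filter (fun x => f b < f x)).card +
      ((C ∩ R).filter (fun x => f x < f b)).card := by
    rw [← Finset.card_union_of_disjoint]
    · apply Finset.card_le_card
      intro x hx
      have hx' := Finset.mem_inter.1 hx
      simp only [Finset.mem_union, Finset.mem_filter, hx, true_and]
      rcases lt_trichotomy (f b) (f x) with h | h | h
      · exact Or.inl h
      · exact absurd (fr.inj b hbS x (hCS hx'.1) h ▸ hx'.2) hbR
      · exact Or.inr h
    · rw [Finset.disjoint_left]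
      intro x hx hx'
      have := (Finset.mem_filter.1 hx).2
      have := (Finset.mem_filter.1 hx').2
      linarith
  have e2 : ((C ∩ B).filter (fun x => f b < f x)).card +
      ((C ∩ B).filter (fun x => f x < f b)).card + 1 ≤ (C ∩ B).card := by
    rw [← Finset.card_union_of_disjoint]
    · have : b ∈ C ∩ B := Finset.mem_inter.2 ⟨hbC, hb⟩
      rw [← Finset.card_erase_add_one this]
      apply Nat.add_le_add_right
      apply Finset.card_le_card
      intro x hx
      rw [Finset.mem_erase]
      simp only [Finset.mem_union, Finset.mem_filter] at hx
      refine ⟨?_, by tauto⟩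
      rintro rfl
      rcases hx with hx | hx <;> exact lt_irrefl _ hx.2
    · rw [Finset.disjoint_left]
      intro x hx hx'
      have := (Finset.mem_filter.1 hx).2
      have := (Finset.mem_filter.1 hx').2
      linarith
  have e3 : ((EmT R B).filter (fun T => b ∈ T ∧ ∀ x ∈ T, f b ≤ f x)).card +
      ((EmT R B).filter (fun T => b ∈ T ∧ ∀ x ∈ T, f x ≤ f b)).card ≤
      ((EmT R B).filter (fun T => b ∈ T)).card := by
    rw [← Finset.card_union_of_disjoint]
    · apply Finset.card_le_card
      intro T hT
      simp only [Finset.mem_union, Finset.mem_filter] at hT ⊢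
      tauto
    · rw [Finset.disjoint_left]
      intro T hT hT'
      obtain ⟨hT1, hT2, hT3⟩ := Finset.mem_filter.1 hT
      obtain ⟨_, _, hT4⟩ := Finset.mem_filter.1 hT'
      unfold EmT at hT1
      rw [Finset.mem_filter, Finset.mem_powersetCard] at hT1
      have : T ⊆ {b} := by
        intro x hx
        rw [Finset.mem_singleton]
        exact fr.inj x (hT1.1.1 hx) b hbS (le_antisymm (hT4 x hx) (hT3 x hx))
      have := Finset.card_le_card this
      rw [hT1.1.2] at this
      simp at this
  omega

lemma wrc_Ico (c : ℕ → Bool) {u v : ℕ} (h : u ≤ v) :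
    wrc c v = wrc c u + ((Finset.Ico u v).filter (fun j => c j = true)).card := by
  induction v, h using Nat.le_induction with
  | base => simp
  | succ v h ih =>
    rw [← Finset.insert_Ico_right_eq_Ico_add_one h, Finset.filter_insert, wrc, ih]
    split_ifs with h1
    · rw [Finset.card_insert_of_notMem (by simp)]; omega
    · rfl

lemma sum_blue {R B : Finset E2} (J : Finset E2) (hJ : J ⊆ B) :
    ∑ b ∈ J, ((EmT R B).filter (fun T => b ∈ T)).card ≤ (EmT R B).card := by
  have := Finset.sum_card_bipartiteAbove_eq_sum_card_bipartiteBelow (s := J) (t := EmT R B)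
    (fun (b : E2) (T : Finset E2) => b ∈ T)
  simp only [Finset.bipartiteAbove, Finset.bipartiteBelow] at this
  rw [this, Finset.card_eq_sum_ones]
  apply Finset.sum_le_sum
  intro T hT
  unfold EmT at hT
  rw [← (Finset.mem_filter.1 hT).2.2.1]
  apply Finset.card_le_card
  intro x hx
  rw [Finset.mem_filter] at hx
  exact Finset.mem_inter.2 ⟨hx.2, hJ hx.1⟩

lemma sum_red {R B : Finset E2} (J : Finset E2) (hJ : J ⊆ R) :
    ∑ b ∈ J, ((EmT R B).filter (fun T => b ∈ T)).card ≤ 2 * (EmT R B).card := by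
  have := Finset.sum_card_bipartiteAbove_eq_sum_card_bipartiteBelow (s := J) (t := EmT R B)
    (fun (b : E2) (T : Finset E2) => b ∈ T)
  simp only [Finset.bipartiteAbove, Finset.bipartiteBelow] at this
  rw [this, Finset.card_eq_sum_ones, Finset.mul_sum]
  apply Finset.sum_le_sum
  intro T hT
  unfold EmT at hT
  rw [mul_one]
  refine le_trans (Finset.card_le_card ?_) (Finset.mem_filter.1 hT).2.1.le
  intro x hx
  rw [Finset.mem_filter] at hx
  exact Finset.mem_inter.2 ⟨hx.2, hJ hx.1⟩

lemma side_bound {R B : Finset E2} {f g : E2 →L[ℝ] ℝ} (fr : Frame (R ∪ B) f g)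
    (hd : Disjoint R B) {p : E2} (hp : p ∈ R)
    (hr : 1 ≤ (R.filter (fun z => f p < f z)).card)
    (hrs : (R.filter (fun z => f p < f z)).card ≤ (B.filter (fun z => f p < f z)).card) :
    ∃ X : ℕ, 1 ≤ X ∧ X ≤ ((EmT R B).filter (fun T => p ∈ T)).card ∧
      ∀ K : ℕ, K * (R.filter (fun z => f p < f z)).card ≤ 2 * (EmT R B).card + X * (K * (K + 1)) := by
  set r := (R.filter (fun z => f p < f z)).card with hrdef
  set H := (R ∪ B).filter (fun z => f p < f z) with hH
  have hpS : p ∈ R ∪ B := Finset.mem_union_left _ hp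
  have hHm : ∀ x ∈ H, x ∈ R ∪ B ∧ f p < f x := fun x hx => Finset.mem_filter.1 hx
  have hHcard : H.card = r + (B.filter (fun z => f p < f z)).card := by
    rw [hH, Finset.filter_union, Finset.card_union_of_disjoint]
    exact Finset.disjoint_filter_filter hd
  obtain ⟨e, he1, he2, he3⟩ := enum_exists H (slp f g p) (by
    intro x hx y hy h
    exact fr.slp_inj hpS (hHm x hx).1 (hHm y hy).1 (hHm x hx).2 (hHm y hy).2 h)
  have hinj := enum_inj he2
  set N := H.card with hN
  set c : ℕ → Bool := fun i => decide (e i ∈ R) with hc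
  have hct : ∀ i, c i = true ↔ e i ∈ R := by intro i; simp [hc]
  have hcf : ∀ i < N, (c i = false ↔ e i ∈ B) := by
    intro i hi
    have h1 := (hHm _ (he1 i hi)).1
    rw [Finset.mem_union] at h1
    have : c i = false ↔ e i ∉ R := by simp [hc]
    rw [this]
    exact ⟨fun h => h1.resolve_left h, fun h h' => Finset.disjoint_left.1 hd h' h⟩
  have hne : ∀ i < N, e i ≠ p := by
    intro i hi h
    have := (hHm _ (he1 i hi)).2
    rw [h] at this; exact lt_irrefl _ this
  have hX := red_changes fr hd hp e N he1 he2 he3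
  have hwr : wrc c N = r := by
    rw [wrc_eq, hrdef]
    have : R.filter (fun z => f p < f z) = ((Finset.range N).filter (fun j => c j = true)).image e := by
      ext x
      simp only [Finset.mem_filter, Finset.mem_image, Finset.mem_range, hct]
      constructor
      · rintro ⟨h1, h2⟩
        obtain ⟨i, hi, rfl⟩ := he3 x (Finset.mem_filter.2 ⟨Finset.mem_union_left _ h1, h2⟩)
        exact ⟨i, ⟨hi, h1⟩, rfl⟩
      · rintro ⟨i, ⟨hi, h1⟩, rfl⟩
        exact ⟨h1, (hHm _ (he1 i hi)).2⟩
    rw [this, Finset.card_image_of_injOn]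
    intro i hi j hj h
    simp only [Finset.coe_filter, Finset.mem_range, Set.mem_ofPred_eq] at hi hj
    exact hinj i hi.1 j hj.1 h
  obtain ⟨hX1, hW⟩ := walk_main c N (by omega) (by omega) (by omega)
  rw [hwr] at hW
  -- good points
  have hgood : ∀ k j : ℕ, j < N → c j = false → wgood c N k j →
      k ≤ ((EmT R B).filter (fun T => e j ∈ T)).card := by
    rintro k j hj hcj ⟨u, v, huj, hjv, hvN, hk⟩
    set C := insert p ((Finset.Ico u v).image e) with hCdef
    have hIm : ∀ x ∈ C, x = p ∨ ∃ i, u ≤ i ∧ i < v ∧ e i = x := by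
      intro x hx
      simp only [hCdef, Finset.mem_insert, Finset.mem_image, Finset.mem_Ico] at hx
      rcases hx with h | ⟨i, ⟨h1, h2⟩, h3⟩
      · exact Or.inl h
      · exact Or.inr ⟨i, h1, h2, h3⟩
    have hmem : ∀ i, u ≤ i → i < v → e i ∈ C := by
      intro i h1 h2
      exact Finset.mem_insert_of_mem (Finset.mem_image_of_mem _ (Finset.mem_Ico.2 ⟨h1, h2⟩))
    have hmono : ∀ a b : ℕ, a ≤ b → b < N → slp f g p (e a) ≤ slp f g p (e b) := by
      intro a b hab hb
      rcases hab.lt_or_eq with h | h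
      · exact (he2 a b h hb).le
      · rw [h]
    have hbt := blue_total fr hd ((hcf j hj).1 hcj) C (by
      intro x hx
      rcases hIm x hx with rfl | ⟨i, h1, h2, rfl⟩
      · exact hpS
      · exact (hHm _ (he1 i (by omega))).1) (hmem j huj hjv) (by
      intro T hT z hz hzi
      have hcone := fr.cone _ p (slp f g p (e u)) (slp f g p (e (v - 1))) (by
        intro x hx
        rcases hIm x (hT hx) with rfl | ⟨i, h1, h2, rfl⟩
        · exact Or.inl rfl
        · exact Or.inr ⟨(hHm _ (he1 i (by omega))).2, hmono u i h1 (by omega),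
            hmono i (v - 1) (by omega) (by omega)⟩) z hzi
      obtain ⟨l, hl, rfl⟩ := he3 z (Finset.mem_filter.2 ⟨hz, hcone.1⟩)
      have h1 := enum_lt he2 (by omega) hcone.2.1
      have h2 := enum_lt he2 hl hcone.2.2
      exact hmem l (by omega) (by omega))
    have hinjI : ∀ (q : ℕ → Prop) [DecidablePred q], Set.InjOn e ((Finset.Ico u v).filter q : Finset ℕ) := by
      intro q _ i hi j hj h
      simp only [Finset.coe_filter, Finset.mem_Ico, Set.mem_ofPred_eq] at hi hj
      exact hinj i (by omega) j (by omega) h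
    have hCR : 1 + ((Finset.Ico u v).filter (fun j => c j = true)).card ≤ (C ∩ R).card := by
      rw [← Finset.card_image_of_injOn (hinjI _), add_comm, ← Finset.card_insert_of_notMem (a := p)]
      · apply Finset.card_le_card
        intro x hx
        simp only [Finset.mem_insert, Finset.mem_image, Finset.mem_filter, Finset.mem_Ico, hct] at hx
        rcases hx with rfl | ⟨i, ⟨⟨h1, h2⟩, h3⟩, rfl⟩
        · exact Finset.mem_inter.2 ⟨Finset.mem_insert_self _ _, hp⟩
        · exact Finset.mem_inter.2 ⟨hmem i h1 h2, h3⟩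
      · intro hx
        simp only [Finset.mem_image, Finset.mem_filter, Finset.mem_Ico] at hx
        obtain ⟨i, ⟨⟨h1, h2⟩, h3⟩, h4⟩ := hx
        exact hne i (by omega) h4
    have hCB : (C ∩ B).card ≤ ((Finset.Ico u v).filter (fun j => ¬ c j = true)).card := by
      rw [← Finset.card_image_of_injOn (hinjI _)]
      apply Finset.card_le_card
      intro x hx
      obtain ⟨hx1, hx2⟩ := Finset.mem_inter.1 hx
      rcases hIm x hx1 with rfl | ⟨i, h1, h2, rfl⟩
      · exact absurd hx2 (Finset.disjoint_left.1 hd hp)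
      · refine Finset.mem_image_of_mem _ (Finset.mem_filter.2 ⟨Finset.mem_Ico.2 ⟨h1, h2⟩, ?_⟩)
        rw [hct]
        exact fun h => Finset.disjoint_left.1 hd h hx2
    have hs := Finset.card_filter_add_card_filter_not (s := Finset.Ico u v) (fun j => c j = true)
    rw [Nat.card_Ico] at hs
    have hI := wrc_Ico c (show u ≤ v by omega)
    simp only [wht] at hk
    omega
  -- summation
  let J := (Finset.range N).filter (fun j => c j = false)
  let G : ℕ → Finset ℕ := fun k => (Finset.range N).filter (fun j => c j = false ∧ wgood c N k j)
  have hsumG : ∀ K : ℕ, ∑ k ∈ Finset.Icc 1 K, (G k).card ≤ (EmT R B).card := by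
    intro K
    have h1 : ∀ k, G k = J.filter (fun j => wgood c N k j) := by
      intro k; simp only [G, J, Finset.filter_filter]
    have h2 := Finset.sum_card_bipartiteAbove_eq_sum_card_bipartiteBelow (s := Finset.Icc 1 K)
      (t := J) (fun (k : ℕ) (j : ℕ) => wgood c N k j)
    simp only [Finset.bipartiteAbove, Finset.bipartiteBelow] at h2
    simp only [h1]
    rw [h2]
    have hJinj : Set.InjOn e (J : Set ℕ) := by
      intro i hi j hj h
      simp only [J, Finset.coe_filter, Finset.mem_range, Set.mem_ofPred_eq] at hi hj
      exact hinj i hi.1 j hj.1 h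
    have h3 := sum_blue (R := R) (B := B) (J.image e) (by
      intro x hx
      obtain ⟨i, hi, rfl⟩ := Finset.mem_image.1 hx
      obtain ⟨hi1, hi2⟩ := Finset.mem_filter.1 hi
      exact (hcf i (Finset.mem_range.1 hi1)).1 hi2)
    rw [Finset.sum_image hJinj] at h3
    refine le_trans (Finset.sum_le_sum ?_) h3
    intro j hj
    obtain ⟨hj1, hj2⟩ := Finset.mem_filter.1 hj
    have h4 : (Finset.Icc 1 K).filter (fun k => wgood c N k j) ⊆
        Finset.Icc 1 ((EmT R B).filter (fun T => e j ∈ T)).card := by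
      intro k hk
      obtain ⟨hk1, hk2⟩ := Finset.mem_filter.1 hk
      exact Finset.mem_Icc.2 ⟨(Finset.mem_Icc.1 hk1).1, hgood k j (Finset.mem_range.1 hj1) hj2 hk2⟩
    have h5 := Finset.card_le_card h4
    simpa using h5
  refine ⟨wch c (N - 1), hX1, hX, ?_⟩
  intro K
  have hind : ∀ K : ℕ, K * r ≤ 2 * ∑ k ∈ Finset.Icc 1 K, (G k).card + wch c (N - 1) * (K * (K + 1)) := by
    intro K
    induction K with
    | zero => simp
    | succ K ih =>
      rw [Finset.sum_Icc_succ_top (by omega)]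
      have := hW (K + 1)
      have h' : r ≤ 2 * (G (K + 1)).card + 2 * (K + 1) * wch c (N - 1) := this
      nlinarith
  have := hind K
  have := hsumG K
  omega

lemma exists_frame (S : Finset E2) (hS : GenPos2 S) : ∃ f g : E2 →L[ℝ] ℝ, Frame S f g := by
  let bad : Finset ℝ := (S ×ˢ S).image (fun q => -(q.1 0 - q.2 0) / (q.1 1 - q.2 1))
  obtain ⟨t, ht⟩ := Infinite.exists_notMem_finset bad
  let x : E2 →L[ℝ] ℝ := EuclideanSpace.proj (0 : Fin 2)
  let y : E2 →L[ℝ] ℝ := EuclideanSpace.proj (1 : Fin 2)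
  have hx : ∀ z : E2, x z = z 0 := fun z => rfl
  have hy : ∀ z : E2, y z = z 1 := fun z => rfl
  refine ⟨x + t • y, y, ⟨!₂[-t, 1], by simp [hx, hy], by simp [hy]⟩,
    ⟨!₂[1, 0], by simp [hx, hy]⟩, ?_, ?_⟩
  · intro a ha b hb h
    simp [hx, hy] at h
    have h1 : a 1 = b 1 := by
      by_contra hne
      apply ht
      refine Finset.mem_image.2 ⟨(a, b), by simp [ha, hb], ?_⟩
      have : a 1 - b 1 ≠ 0 := sub_ne_zero.2 hne
      simp only
      field_simp
      linarith
    have h0 : a 0 = b 0 := by rw [h1] at h; linarith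
    ext i
    fin_cases i
    · exact h0
    · exact h1
  · intro a ha b hb c hc hab hac hbc h
    simp [hx, hy] at h
    have h' : (b 1 - a 1) * (c 0 - a 0) = (c 1 - a 1) * (b 0 - a 0) := by linarith
    have hcard : ({a, b, c} : Finset E2).card = 3 := Finset.card_eq_three.2 ⟨a, b, c, hab, hac, hbc, rfl⟩
    have hi := hS {a, b, c} (by
      intro z hz
      simp at hz
      rcases hz with rfl | rfl | rfl <;> assumption) hcard
    have hj : AffineIndependent ℝ ![a, b, c] := by
      let m : Fin 3 ↪ {z : E2 // z ∈ ({a, b, c} : Finset E2)} :=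
        ⟨![⟨a, by simp⟩, ⟨b, by simp⟩, ⟨c, by simp⟩], by
          intro i j hij
          fin_cases i <;> fin_cases j <;> simp_all⟩
      have := hi.comp_embedding m
      convert this using 1
      ext i
      fin_cases i <;> rfl
    rw [affineIndependent_iff_not_collinear_set] at hj
    apply hj
    rw [collinear_iff_of_mem (p₀ := a) (by simp)]
    refine ⟨b - a, ?_⟩
    intro z hz
    simp only [Set.mem_insert_iff, Set.mem_singleton_iff] at hz
    rcases hz with rfl | rfl | rfl
    · exact ⟨0, by simp⟩
    · exact ⟨1, by simp⟩
    · by_cases hb1 : b 1 - a 1 = 0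
      · have hb0 : b 0 - a 0 ≠ 0 := by
          intro hb0
          apply hab
          ext i
          fin_cases i
          · simp; linarith
          · simp; linarith
        refine ⟨(z 0 - a 0) / (b 0 - a 0), ?_⟩
        have : z 1 - a 1 = 0 := by
          rw [hb1, zero_mul] at h'
          rcases mul_eq_zero.1 h'.symm with h2 | h2
          · exact h2
          · exact absurd h2 hb0
        ext i
        fin_cases i
        · simp; field_simp; ring
        · simp [hb1]; linarith
      · refine ⟨(z 1 - a 1) / (b 1 - a 1), ?_⟩
        ext i
        fin_cases i
        · simp; field_simp; linarith
        · simp; field_simp; ring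

theorem empty_red_21_triangles_explicit_lower_bound :
    ∀ (n : ℕ), 22 ≤ n → ∀ (R B : Finset (EuclideanSpace ℝ (Fin 2))),
      Disjoint R B → R.card = n → n - 1 ≤ B.card → GenPos2 (R ∪ B) →
      (1 / 32 : ℝ) * (n : ℝ) ^ ((3 : ℝ) / 2) ≤ (emptyRed21Count R B : ℝ) := by
  intro n hn R B hd hR hB hgp
  obtain ⟨f, g, fr⟩ := exists_frame _ hgp
  have hcount : emptyRed21Count R B = (EmT R B).card := rfl
  rw [hcount]
  set T := (EmT R B).card with hT
  -- the middle points
  obtain ⟨e, he1, he2, he3⟩ := enum_exists R f (fun a ha b hb h =>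
    fr.inj a (Finset.mem_union_left _ ha) b (Finset.mem_union_left _ hb) h)
  rw [hR] at he1 he2 he3
  have hinj := enum_inj he2
  set a := n / 4 with ha
  have hMinj : ∀ u v, v ≤ n → Set.InjOn e (Finset.Ico u v : Set ℕ) := by
    intro u v hv i hi j hj h
    simp only [Finset.coe_Ico, Set.mem_Ico] at hi hj
    exact hinj i (by omega) j (by omega) h
  set M := (Finset.Ico a (n - a)).image e with hM
  have hMcard : M.card = n - a - a := by
    rw [hM, Finset.card_image_of_injOn (hMinj _ _ (by omega)), Nat.card_Ico]
  have hMR : M ⊆ R := by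
    intro x hx
    obtain ⟨i, hi, rfl⟩ := Finset.mem_image.1 hx
    rw [Finset.mem_Ico] at hi
    exact he1 i (by omega)
  have hMne : M.Nonempty := by
    rw [← Finset.card_pos]; omega
  obtain ⟨p, hpM, hp⟩ : ∃ p ∈ M, M.card * ((EmT R B).filter (fun T => p ∈ T)).card ≤ 2 * T := by
    apply Finset.exists_le_of_sum_le hMne
    rw [← Finset.mul_sum, Finset.sum_const, smul_eq_mul]
    exact Nat.mul_le_mul_left _ (sum_red M hMR)
  have hpR := hMR hpM
  have hpB : p ∉ B := Finset.disjoint_left.1 hd hpR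
  have hright : a ≤ (R.filter (fun z => f p < f z)).card := by
    obtain ⟨i, hi, rfl⟩ := Finset.mem_image.1 hpM
    rw [Finset.mem_Ico] at hi
    calc a = ((Finset.Ico (n - a) n).image e).card := by
          rw [Finset.card_image_of_injOn (hMinj _ _ le_rfl), Nat.card_Ico]; omega
      _ ≤ _ := by
          apply Finset.card_le_card
          intro x hx
          obtain ⟨j, hj, rfl⟩ := Finset.mem_image.1 hx
          rw [Finset.mem_Ico] at hj
          exact Finset.mem_filter.2 ⟨he1 j (by omega), he2 i j (by omega) (by omega)⟩
  have hleft : a ≤ (R.filter (fun z => f z < f p)).card := by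
    obtain ⟨i, hi, rfl⟩ := Finset.mem_image.1 hpM
    rw [Finset.mem_Ico] at hi
    calc a = ((Finset.Ico 0 a).image e).card := by
          rw [Finset.card_image_of_injOn (hMinj _ _ (by omega)), Nat.card_Ico]; omega
      _ ≤ _ := by
          apply Finset.card_le_card
          intro x hx
          obtain ⟨j, hj, rfl⟩ := Finset.mem_image.1 hx
          rw [Finset.mem_Ico] at hj
          exact Finset.mem_filter.2 ⟨he1 j (by omega), he2 j i (by omega) (by omega)⟩
  have hRsplit : (R.filter (fun z => f p < f z)).card + (R.filter (fun z => f z < f p)).card + 1 ≤ n := by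
    rw [← Finset.card_union_of_disjoint, ← hR, ← Finset.card_erase_add_one hpR]
    · apply Nat.add_le_add_right
      apply Finset.card_le_card
      intro x hx
      simp only [Finset.mem_union, Finset.mem_filter, Finset.mem_erase] at hx ⊢
      refine ⟨?_, by tauto⟩
      rintro rfl
      rcases hx with h | h <;> exact lt_irrefl _ h.2
    · rw [Finset.disjoint_left]
      intro x hx hx'
      have := (Finset.mem_filter.1 hx).2
      have := (Finset.mem_filter.1 hx').2
      linarith
  have hBsplit : B.card ≤ (B.filter (fun z => f p < f z)).card + (B.filter (fun z => f z < f p)).card := by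
    refine le_trans (Finset.card_le_card ?_) (Finset.card_union_le _ _)
    intro x hx
    simp only [Finset.mem_union, Finset.mem_filter, hx, true_and]
    rcases lt_trichotomy (f p) (f x) with h | h | h
    · exact Or.inl h
    · exact absurd (fr.inj p (Finset.mem_union_left _ hpR) x (Finset.mem_union_right _ hx) h ▸ hx) hpB
    · exact Or.inr h
  obtain ⟨r, X, har, hX1, hX2, hK⟩ : ∃ r X : ℕ, a ≤ r ∧ 1 ≤ X ∧
      X ≤ ((EmT R B).filter (fun T => p ∈ T)).card ∧
      ∀ K : ℕ, K * r ≤ 2 * T + X * (K * (K + 1)) := by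
    by_cases hside : (R.filter (fun z => f p < f z)).card ≤ (B.filter (fun z => f p < f z)).card
    · obtain ⟨X, h1, h2, h3⟩ := side_bound fr hd hpR (by omega) hside
      exact ⟨_, X, hright, h1, h2, h3⟩
    · have hs := side_bound fr.neg hd hpR
      simp only [neg_apply, neg_lt_neg_iff] at hs
      obtain ⟨X, h1, h2, h3⟩ := hs (by omega) (by omega)
      exact ⟨_, X, hleft, h1, h2, h3⟩
  -- numerics
  set m : ℝ := Real.sqrt n with hm
  have hm0 : 0 < m := Real.sqrt_pos.2 (by exact_mod_cast (by omega : 0 < n))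
  have hmm : m * m = n := Real.mul_self_sqrt (by positivity)
  have hpow : (n : ℝ) ^ ((3 : ℝ) / 2) = m ^ 3 := by
    rw [hm, Real.sqrt_eq_rpow, ← Real.rpow_natCast, ← Real.rpow_mul (by positivity)]
    norm_num
  rw [hpow]
  by_contra hlt
  push Not at hlt
  have hXT : n * X ≤ 4 * T := by
    have h1 : M.card * X ≤ 2 * T := le_trans (Nat.mul_le_mul_left _ hX2) hp
    have h2 : n ≤ 2 * M.card := by omega
    nlinarith
  have hXT' : (n : ℝ) * X ≤ 4 * T := by exact_mod_cast hXT
  have hXm : (X : ℝ) < m / 8 := by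
    have : m * m * X < m * m * (m / 8) := by rw [hmm]; rw [← hmm] at hXT' ⊢; nlinarith
    exact lt_of_mul_lt_mul_left this (by positivity)
  have hX1' : (1 : ℝ) ≤ X := by exact_mod_cast hX1
  have hm8 : 8 < m := by linarith
  set K := ⌊m⌋₊ with hKdef
  have hK1 : (K : ℝ) ≤ m := Nat.floor_le hm0.le
  have hK2 : m < K + 1 := Nat.lt_floor_add_one m
  have hKK : (K : ℝ) * r ≤ 2 * T + X * (K * (K + 1)) := by exact_mod_cast hK K
  have hr4 : (n : ℝ) ≤ 4 * r + 3 := by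
    exact_mod_cast (by omega : n ≤ 4 * r + 3)
  have hXK : (X : ℝ) * (K + 1) ≤ m / 8 * (m + 1) := by
    apply mul_le_mul hXm.le (by linarith) (by positivity) (by positivity)
  have hA : (m ^ 2 - m - 6) / 8 ≤ r - X * (K + 1) := by nlinarith
  have hB' : (m - 1) * ((m ^ 2 - m - 6) / 8) ≤ K * (r - X * (K + 1)) := by
    apply mul_le_mul (by linarith) hA _ (by positivity)
    nlinarith
  have hC' : m ^ 3 / 16 ≤ (m - 1) * ((m ^ 2 - m - 6) / 8) := by
    nlinarith [mul_pos hm0 (sub_pos.2 hm8), mul_pos (mul_pos hm0 hm0) (sub_pos.2 hm8)]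
  nlinarith
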